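/- arXiv:0812.4058 — 10 statements merged into one kernel-verified Lean document; each statement's English description precedes it below -/
import Mathlib

section
/- Let (V, m) be an n-ary Nambu algebra over a field K of characteristic zero and let ρ : V → V be an endomorphism of (V, m). Define the n-linear map m_ρ = ρ ∘ m. Then the triple (V, m_ρ, (ρ, ..., ρ)) is an n-ary Hom-Nambu algebra, i.e. m_ρ satisfies the n-ary Hom-Nambu identity with α_1 = ... = α_{n-1} = ρ. -/
open scoped BigOperators TensorProduct

/-- The argument vector `(x_1, …, x_{n-1}, v)` of length `n`. -/
def NambuArgs {V : Type*} {n : ℕ} (x : Fin (n - 1) → V) (v : V) : Fin n → V :=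
  fun j => if h : (j : ℕ) < n - 1 then x ⟨j, h⟩ else v

/-- The `n`-ary Hom-Nambu identity for an `n`-linear map `m` with twisting
maps `α_1, …, α_{n-1}` (0-indexed here): for all `x_1, …, x_{n-1}` and `y_1, …, y_n`,
`m(α_1 x_1, …, α_{n-1} x_{n-1}, m(y_1, …, y_n))`
`= Σ_{i=1}^{n} m(α_1 y_1, …, α_{i-1} y_{i-1}, m(x_1, …, x_{n-1}, y_i), α_i y_{i+1}, …, α_{n-1} y_n)`. -/
def HomNambuIdentity {K V : Type*} [Field K] [AddCommGroup V] [Module K V] {n : ℕ}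
    (m : MultilinearMap K (fun _ : Fin n => V) V) (α : Fin (n - 1) → V →ₗ[K] V) : Prop :=
  ∀ (x : Fin (n - 1) → V) (y : Fin n → V),
    m (NambuArgs (fun k => α k (x k)) (m y)) =
      ∑ i : Fin n, m (fun j : Fin n =>
        if h : (j : ℕ) < (i : ℕ) then α ⟨j, by omega⟩ (y j)
        else if h' : (j : ℕ) = (i : ℕ) then m (NambuArgs x (y i))
        else α ⟨(j : ℕ) - 1, by omega⟩ (y j))

/-- `ρ` is an endomorphism of the `n`-ary algebra `(V, m)`. -/
def IsNAryEndo {K V : Type*} [Field K] [AddCommGroup V] [Module K V] {n : ℕ}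
    (m : MultilinearMap K (fun _ : Fin n => V) V) (ρ : V →ₗ[K] V) : Prop :=
  ∀ x : Fin n → V, ρ (m x) = m (fun i => ρ (x i))

/-- Twisting an `n`-ary Nambu algebra `(V, m)` by an endomorphism `ρ`
yields the `n`-ary Hom-Nambu algebra `(V, ρ ∘ m, (ρ, …, ρ))`. -/
theorem homNambu_of_nambu_endo {K V : Type*} [Field K] [CharZero K]
    [AddCommGroup V] [Module K V] {n : ℕ} (hn : 2 ≤ n)
    (m : MultilinearMap K (fun _ : Fin n => V) V)
    (hm : HomNambuIdentity m (fun _ => LinearMap.id))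
    (ρ : V →ₗ[K] V) (hρ : IsNAryEndo m ρ) :
    HomNambuIdentity (ρ.compMultilinearMap m) (fun _ => ρ) := by
  intro x y
  -- Both sides are the images under `ρ ∘ ρ` of the two sides of the Nambu identity: the inner
  -- `ρ` moves through the outer `m` onto its arguments, while the outer `ρ` stays in front.
  have key := congrArg (fun v => ρ (ρ v)) (hm x y)
  simp only [map_sum] at key
  simp only [LinearMap.compMultilinearMap_apply]
  convert key using 1
  · refine congrArg ρ (Eq.trans (congrArg m (funext fun j => ?_)) (hρ _).symm)
    simp only [NambuArgs]
    split_ifs <;> rfl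
  · refine Finset.sum_congr rfl fun i _ =>
      congrArg ρ (Eq.trans (congrArg m (funext fun j => ?_)) (hρ _).symm)
    split_ifs <;> rfl
end

section
/- Let (V, m) be an n-ary Nambu-Lie algebra over a field K of characteristic zero and let ρ : V → V be an endomorphism of (V, m). Define m_ρ = ρ ∘ m. Then (V, m_ρ, (ρ, ..., ρ)) is an n-ary Hom-Nambu-Lie algebra: m_ρ is skew-symmetric and satisfies the n-ary Hom-Nambu identity with α_1 = ... = α_{n-1} = ρ. -/
/-! Since `ρ` is linear and commutes with `m`, both sides of the Hom-Nambu identity for `ρ ∘ m`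
with twisting maps `ρ` are `ρ ∘ ρ` applied to the corresponding sides of the untwisted identity
for `m`. Skew-symmetry is inherited because `ρ` commutes with multiplication by signs. -/

open scoped BigOperators TensorProduct

/-- Skew-symmetry of an `n`-linear map:
`m(x_{σ(1)}, …, x_{σ(n)}) = sgn(σ) • m(x_1, …, x_n)`. -/
def SkewSymmetricMap {K V : Type*} [Field K] [AddCommGroup V] [Module K V] {n : ℕ}
    (m : MultilinearMap K (fun _ : Fin n => V) V) : Prop :=
  ∀ (σ : Equiv.Perm (Fin n)) (x : Fin n → V),
    m (x ∘ σ) = (Equiv.Perm.sign σ : ℤ) • m x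

/-- Twisting an `n`-ary Nambu-Lie algebra `(V, m)` by an endomorphism `ρ`
yields the `n`-ary Hom-Nambu-Lie algebra `(V, ρ ∘ m, (ρ, …, ρ))`: the twisted bracket is
skew-symmetric and satisfies the `n`-ary Hom-Nambu identity with all twisting maps equal to `ρ`. -/
theorem homNambuLie_of_nambuLie_endo {K V : Type*} [Field K] [CharZero K]
    [AddCommGroup V] [Module K V] {n : ℕ} (hn : 2 ≤ n)
    (m : MultilinearMap K (fun _ : Fin n => V) V)
    (hskew : SkewSymmetricMap m)
    (hm : HomNambuIdentity m (fun _ => LinearMap.id))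
    (ρ : V →ₗ[K] V) (hρ : IsNAryEndo m ρ) :
    SkewSymmetricMap (ρ.compMultilinearMap m) ∧
      HomNambuIdentity (ρ.compMultilinearMap m) (fun _ => ρ) := by
  refine ⟨fun σ x => ?_, fun x y => ?_⟩
  · simp only [LinearMap.compMultilinearMap_apply]
    rw [hskew σ x, map_zsmul]
  · simp only [LinearMap.compMultilinearMap_apply]
    have hargs : NambuArgs (fun k => ρ (x k)) (ρ (m y)) =
        fun j => ρ (NambuArgs x (m y) j) := by
      funext j
      simp only [NambuArgs]
      split_ifs <;> rfl
    have hid := hm x y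
    simp only [LinearMap.id_apply] at hid
    rw [hargs, ← hρ, hid, map_sum, map_sum]
    refine Finset.sum_congr rfl fun i _ => ?_
    rw [hρ]
    congr 2
    funext j
    split_ifs <;> rfl
end

section
/- Let (V, m) be an n-ary Lie algebra over a field K of characteristic zero and let ρ : V → V be an endomorphism of (V, m). Define m_ρ = ρ ∘ m. Then (V, m_ρ, (ρ, ..., ρ)) is an n-ary Hom-Lie algebra: m_ρ is skew-symmetric and satisfies the n-ary Hom-Jacobi identity with α_1 = ... = α_{n-1} = ρ. -/
open scoped BigOperators TensorProduct

/-- The `n`-ary Hom-Jacobi identity: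
`Σ_{σ ∈ S_{2n-1}} sgn(σ) m(α_1(x_{σ(1)}), …, α_{n-1}(x_{σ(n-1)}), m(x_{σ(n)}, …, x_{σ(2n-1)})) = 0`. -/
def HomJacobiIdentity {K V : Type*} [Field K] [AddCommGroup V] [Module K V] {n : ℕ}
    (m : MultilinearMap K (fun _ : Fin n => V) V) (α : Fin (n - 1) → V →ₗ[K] V) : Prop :=
  ∀ x : Fin (2 * n - 1) → V,
    ∑ σ : Equiv.Perm (Fin (2 * n - 1)), (Equiv.Perm.sign σ : ℤ) •
      m (fun j : Fin n =>
        if h : (j : ℕ) < n - 1 then α ⟨j, h⟩ (x (σ ⟨j, by omega⟩))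
        else m (fun k : Fin n => x (σ ⟨n - 1 + (k : ℕ), by omega⟩))) = 0

/-- Twisting an `n`-ary Lie algebra `(V, m)` by an endomorphism `ρ`
yields the `n`-ary Hom-Lie algebra `(V, ρ ∘ m, (ρ, …, ρ))`: the twisted bracket is
skew-symmetric and satisfies the `n`-ary Hom-Jacobi identity with all twisting maps equal to `ρ`. -/
theorem homLie_of_nAryLie_endo {K V : Type*} [Field K] [CharZero K]
    [AddCommGroup V] [Module K V] {n : ℕ} (hn : 2 ≤ n)
    (m : MultilinearMap K (fun _ : Fin n => V) V)
    (hskew : SkewSymmetricMap m)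
    (hm : HomJacobiIdentity m (fun _ => LinearMap.id))
    (ρ : V →ₗ[K] V) (hρ : IsNAryEndo m ρ) :
    SkewSymmetricMap (ρ.compMultilinearMap m) ∧
      HomJacobiIdentity (ρ.compMultilinearMap m) (fun _ => ρ) := by
  refine ⟨fun σ x => ?_, fun x => ?_⟩
  · simp only [LinearMap.compMultilinearMap_apply, hskew σ x, map_zsmul]
  · -- The twisted Jacobi sum is `ρ ∘ ρ` of the Jacobi sum of `m`: as `ρ` is an endomorphism,
    -- `m (ρ a₁, …, ρ aₙ₋₁, ρ (m b)) = ρ (m (a₁, …, aₙ₋₁, m b))`.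
    have h := congrArg (fun v => ρ (ρ v)) (hm x)
    simp only [map_sum, map_zsmul, map_zero] at h
    rw [← h]
    refine Finset.sum_congr rfl fun σ _ => ?_
    refine congrArg (fun v => (Equiv.Perm.sign σ : ℤ) • ρ v) (Eq.trans ?_ (hρ _).symm)
    refine congrArg m (funext fun j => ?_)
    split_ifs <;> rfl
end

section
/- Let (V, m) be an n-ary totally associative algebra over a field K of characteristic zero and let ρ : V → V be an endomorphism of (V, m). Define m_ρ = ρ ∘ m. Then (V, m_ρ, (ρ, ..., ρ)) is an n-ary totally Hom-associative algebra, i.e. m_ρ satisfies the n-ary total Hom-associativity identity with α_1 = ... = α_{n-1} = ρ. -/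
open scoped BigOperators TensorProduct

/-- The argument vector of the `i`-th term of the Hom-associativity identities:
`(α_1 x_1, …, α_i x_i, m(x_{i+1}, …, x_{i+n}), α_{i+1} x_{i+1+n}, …, α_{n-1} x_{2n-1})`
(written here 0-indexed, with the inner `m` in slot `i`). -/
def AssocArgs {K V : Type*} [Field K] [AddCommGroup V] [Module K V] {n : ℕ}
    (m : MultilinearMap K (fun _ : Fin n => V) V) (α : Fin (n - 1) → V →ₗ[K] V)
    (i : Fin n) (x : Fin (2 * n - 1) → V) : Fin n → V :=
  fun j =>
    if h : (j : ℕ) < (i : ℕ) then α ⟨j, by omega⟩ (x ⟨j, by omega⟩)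
    else if h' : (j : ℕ) = (i : ℕ) then m (fun k : Fin n => x ⟨(i : ℕ) + (k : ℕ), by omega⟩)
    else α ⟨(j : ℕ) - 1, by omega⟩ (x ⟨(j : ℕ) + n - 1, by omega⟩)

/-- The `n`-ary total Hom-associativity identity. -/
def TotalHomAssociativity {K V : Type*} [Field K] [AddCommGroup V] [Module K V] {n : ℕ}
    (m : MultilinearMap K (fun _ : Fin n => V) V) (α : Fin (n - 1) → V →ₗ[K] V) : Prop :=
  ∀ (i j : Fin n), i < j → ∀ x : Fin (2 * n - 1) → V,
    m (AssocArgs m α i x) = m (AssocArgs m α j x)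

/-- The twisted argument vector is the slotwise `ρ`-image of the untwisted one. -/
lemma assocArgs_compMultilinearMap {K V : Type*} [Field K] [AddCommGroup V] [Module K V]
    {n : ℕ} (m : MultilinearMap K (fun _ : Fin n => V) V) (ρ : V →ₗ[K] V)
    (i : Fin n) (x : Fin (2 * n - 1) → V) :
    AssocArgs (ρ.compMultilinearMap m) (fun _ => ρ) i x =
      fun k => ρ (AssocArgs m (fun _ => LinearMap.id) i x k) := by
  funext k
  unfold AssocArgs
  split_ifs <;> rfl

/-- Twisting an `n`-ary totally associative algebra `(V, m)` by an
endomorphism `ρ` yields the `n`-ary totally Hom-associative algebra `(V, ρ ∘ m, (ρ, …, ρ))`. -/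
theorem totallyHomAssoc_of_totallyAssoc_endo {K V : Type*} [Field K] [CharZero K]
    [AddCommGroup V] [Module K V] {n : ℕ} (hn : 2 ≤ n)
    (m : MultilinearMap K (fun _ : Fin n => V) V)
    (hm : TotalHomAssociativity m (fun _ => LinearMap.id))
    (ρ : V →ₗ[K] V) (hρ : IsNAryEndo m ρ) :
    TotalHomAssociativity (ρ.compMultilinearMap m) (fun _ => ρ) := by
  intro i j hij x
  -- Both sides equal `ρ (ρ (m _))` on the untwisted argument vectors.
  simp only [assocArgs_compMultilinearMap, LinearMap.compMultilinearMap_apply]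
  rw [← hρ, ← hρ, hm i j hij x]
end

section
/- Let (V, m) be an n-ary partially associative algebra over a field K of characteristic zero and let ρ : V → V be an endomorphism of (V, m). Define m_ρ = ρ ∘ m. Then (V, m_ρ, (ρ, ..., ρ)) is an n-ary partially Hom-associative algebra, i.e. m_ρ satisfies the n-ary partial Hom-associativity identity with α_1 = ... = α_{n-1} = ρ. -/
/-!
Each term of the identity for `ρ ∘ m` is `ρ²` applied to the corresponding term for `m`: one factor
`ρ` is applied to every argument and is pulled out because `ρ` is an endomorphism, the other is the
outer `ρ` of `ρ ∘ m`. By linearity the whole sum is `ρ²` of the partial associativity sum of `m`,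
which vanishes.
-/

open scoped BigOperators TensorProduct

/-- The `n`-ary partial Hom-associativity identity. -/
def PartialHomAssociativity {K V : Type*} [Field K] [AddCommGroup V] [Module K V] {n : ℕ}
    (m : MultilinearMap K (fun _ : Fin n => V) V) (α : Fin (n - 1) → V →ₗ[K] V) : Prop :=
  ∀ x : Fin (2 * n - 1) → V, ∑ i : Fin n, m (AssocArgs m α i x) = 0

/-- Twisting an `n`-ary partially associative algebra `(V, m)` by an
endomorphism `ρ` yields the `n`-ary partially Hom-associative algebra `(V, ρ ∘ m, (ρ, …, ρ))`. -/
theorem partiallyHomAssoc_of_partiallyAssoc_endo {K V : Type*} [Field K] [CharZero K]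
    [AddCommGroup V] [Module K V] {n : ℕ} (hn : 2 ≤ n)
    (m : MultilinearMap K (fun _ : Fin n => V) V)
    (hm : PartialHomAssociativity m (fun _ => LinearMap.id))
    (ρ : V →ₗ[K] V) (hρ : IsNAryEndo m ρ) :
    PartialHomAssociativity (ρ.compMultilinearMap m) (fun _ => ρ) := by
  intro x
  -- Every slot of the twisted argument vector, the inner product included, carries one factor `ρ`.
  have hargs : ∀ i, AssocArgs (ρ.compMultilinearMap m) (fun _ => ρ) i x
      = fun j => ρ (AssocArgs m (fun _ => LinearMap.id) i x j) := by
    intro i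
    funext j
    unfold AssocArgs
    split_ifs <;> rfl
  have hterm : ∀ i, (ρ.compMultilinearMap m) (AssocArgs (ρ.compMultilinearMap m) (fun _ => ρ) i x)
      = ρ (ρ (m (AssocArgs m (fun _ => LinearMap.id) i x))) := by
    intro i
    rw [hargs, LinearMap.compMultilinearMap_apply, ← hρ]
  simp only [hterm, ← map_sum]
  rw [hm x, map_zero, map_zero]
end

section
/- Let (V, m) be an n-ary weak totally associative algebra over a field K of characteristic zero and let ρ : V → V be an endomorphism of (V, m). Define m_ρ = ρ ∘ m. Then (V, m_ρ, (ρ, ..., ρ)) is an n-ary weak totally Hom-associative algebra: for all x_1, ..., x_{2n-1} ∈ V, m_ρ(ρ(x_1), ..., ρ(x_{n-1}), m_ρ(x_n, ..., x_{2n-1})) = m_ρ(m_ρ(x_1, ..., x_n), ρ(x_{n+1}), ..., ρ(x_{2n-1})). -/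
open scoped BigOperators TensorProduct

/-- The `n`-ary weak total Hom-associativity identity:
`m(α_1 x_1, …, α_{n-1} x_{n-1}, m(x_n, …, x_{2n-1})) = m(m(x_1, …, x_n), α_1 x_{n+1}, …, α_{n-1} x_{2n-1})`. -/
def WeakTotalHomAssociativity {K V : Type*} [Field K] [AddCommGroup V] [Module K V] {n : ℕ}
    (m : MultilinearMap K (fun _ : Fin n => V) V) (α : Fin (n - 1) → V →ₗ[K] V) : Prop :=
  ∀ x : Fin (2 * n - 1) → V,
    m (fun j : Fin n =>
        if h : (j : ℕ) < n - 1 then α ⟨j, h⟩ (x ⟨j, by omega⟩)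
        else m (fun k : Fin n => x ⟨n - 1 + (k : ℕ), by omega⟩)) =
    m (fun j : Fin n =>
        if h : (j : ℕ) = 0 then m (fun k : Fin n => x ⟨(k : ℕ), by omega⟩)
        else α ⟨(j : ℕ) - 1, by omega⟩ (x ⟨(j : ℕ) + n - 1, by omega⟩))

/-- Twisting an `n`-ary weak totally associative algebra `(V, m)` by an
endomorphism `ρ` yields the `n`-ary weak totally Hom-associative algebra
`(V, ρ ∘ m, (ρ, …, ρ))`. -/
theorem weakTotallyHomAssoc_of_weakTotallyAssoc_endo {K V : Type*} [Field K] [CharZero K]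
    [AddCommGroup V] [Module K V] {n : ℕ} (hn : 2 ≤ n)
    (m : MultilinearMap K (fun _ : Fin n => V) V)
    (hm : WeakTotalHomAssociativity m (fun _ => LinearMap.id))
    (ρ : V →ₗ[K] V) (hρ : IsNAryEndo m ρ) :
    WeakTotalHomAssociativity (ρ.compMultilinearMap m) (fun _ => ρ) := by
  intro x
  -- Both sides are `ρ` applied to the untwisted identity at `ρ x_1, …, ρ x_{2n-1}`.
  have h := congrArg ρ (hm (fun i => ρ (x i)))
  simp only [LinearMap.id_apply] at h
  simp only [LinearMap.compMultilinearMap_apply, hρ (fun k : Fin n => x _)]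
  exact h
end

section
/- Let A = K[x_1, x_2, x_3] be the polynomial algebra in three variables over a field K of characteristic zero, and define the trilinear bracket [f_1, f_2, f_3] = det( (∂f_i/∂x_j)_{1 ≤ i,j ≤ 3} ), the determinant of the functional Jacobian matrix. Then (A, [·,·,·]) is a ternary Nambu-Lie algebra: the bracket is skew-symmetric and satisfies the ternary Nambu (fundamental) identity [x, y, [z, u, v]] = [[x, y, z], u, v] + [z, [x, y, u], v] + [z, u, [x, y, v]] for all x, y, z, u, v ∈ A. -/
/-!
Skew-symmetry is the behaviour of a determinant under a permutation of its rows.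

For the fundamental identity, `D = [x, y, ·]` is the derivation `∑ⱼ cⱼ ∂ⱼ` whose coefficients `cⱼ`
are the entries of `∇x × ∇y`. The right-hand side of the identity exceeds `D [z, u, v]`
by `(∑ⱼ ∂ⱼcⱼ) [z, u, v]`, and the divergence `∑ⱼ ∂ⱼcⱼ` of a cross product of two gradients
vanishes since partial derivatives commute. With the determinants expanded by `jacBracket_expand`
and mixed second derivatives put in a fixed order, this is a polynomial identity in the first and
second derivatives of the five arguments, which `ring` verifies.
-/

open scoped BigOperators

/-- The functional Jacobian bracket on `K[x₁,x₂,x₃]`: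
`[f, g, h] = det((∂fᵢ/∂xⱼ))` where `(f₁,f₂,f₃) = (f,g,h)`. -/
noncomputable def jacBracket {K : Type*} [Field K]
    (f g h : MvPolynomial (Fin 3) K) : MvPolynomial (Fin 3) K :=
  Matrix.det (Matrix.of fun i j => MvPolynomial.pderiv j (![f, g, h] i))

open MvPolynomial in
theorem jacBracket_expand {K : Type*} [Field K] (f g h : MvPolynomial (Fin 3) K) :
    jacBracket f g h =
      pderiv 0 f * (pderiv 1 g * pderiv 2 h - pderiv 2 g * pderiv 1 h) -
      pderiv 1 f * (pderiv 0 g * pderiv 2 h - pderiv 2 g * pderiv 0 h) +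
      pderiv 2 f * (pderiv 0 g * pderiv 1 h - pderiv 1 g * pderiv 0 h) := by
  simp only [jacBracket, Matrix.det_fin_three, Matrix.of_apply, Matrix.cons_val]
  ring

open MvPolynomial in
theorem pderiv_pderiv_comm {K : Type*} [Field K] (i j : Fin 3) (f : MvPolynomial (Fin 3) K) :
    pderiv i (pderiv j f) = pderiv j (pderiv i f) := by
  -- The commutator of two derivations is a derivation, and it kills every variable.
  have h : ⁅pderiv (R := K) i, pderiv (R := K) j⁆ = 0 := by
    apply MvPolynomial.derivation_ext
    intro k
    simp [Derivation.commutator_apply, MvPolynomial.pderiv_X, Pi.single_apply, apply_ite]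
  have := congrArg (fun D => D f) h
  simpa [Derivation.commutator_apply, sub_eq_zero] using this

/-- The polynomial algebra `K[x₁,x₂,x₃]` with the functional Jacobian
bracket is a ternary Nambu-Lie algebra: the bracket is skew-symmetric and satisfies the
ternary Nambu (fundamental) identity. -/
theorem jacBracket_ternary_nambuLie {K : Type*} [Field K] [CharZero K] :
    (∀ (σ : Equiv.Perm (Fin 3)) (f : Fin 3 → MvPolynomial (Fin 3) K),
        jacBracket (f (σ 0)) (f (σ 1)) (f (σ 2)) =
          (Equiv.Perm.sign σ : ℤ) • jacBracket (f 0) (f 1) (f 2)) ∧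
      (∀ x y z u v : MvPolynomial (Fin 3) K,
        jacBracket x y (jacBracket z u v) =
          jacBracket (jacBracket x y z) u v + jacBracket z (jacBracket x y u) v +
            jacBracket z u (jacBracket x y v)) := by
  refine ⟨fun σ f => ?_, fun x y z u v => ?_⟩
  · have h : (Matrix.of fun i j => MvPolynomial.pderiv j (![f (σ 0), f (σ 1), f (σ 2)] i)) =
        (Matrix.of fun i j => MvPolynomial.pderiv j (![f 0, f 1, f 2] i)).submatrix σ id := by
      have key (k : Fin 3) : ![f 0, f 1, f 2] k = f k := by fin_cases k <;> rfl
      ext1 i j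
      simp only [Matrix.of_apply, Matrix.submatrix_apply, key, id]
      fin_cases i <;> rfl
    rw [jacBracket, h, Matrix.det_permute, jacBracket, zsmul_eq_mul]
  · simp only [jacBracket_expand, map_add, map_sub, Derivation.leibniz, smul_eq_mul,
      pderiv_pderiv_comm 1 0, pderiv_pderiv_comm 2 0, pderiv_pderiv_comm 2 1]
    ring
end

section
/- Let A = K[x_1, x_2, x_3] be the polynomial algebra in three variables over a field K of characteristic zero, equipped with the functional Jacobian bracket [f_1, f_2, f_3] = det( (∂f_i/∂x_j)_{1 ≤ i,j ≤ 3} ). Let γ = (γ_1, γ_2, γ_3) be a triple of elements of A with det( (∂γ_i/∂x_j)_{1 ≤ i,j ≤ 3} ) = 1, let ρ_γ : A → A be the substitution homomorphism f ↦ f(γ_1, γ_2, γ_3), and define the twisted bracket [f_1, f_2, f_3]_γ = ρ_γ([f_1, f_2, f_3]). Then (A, [·,·,·]_γ, (ρ_γ, ρ_γ)) is a ternary Hom-Nambu-Lie algebra: [·,·,·]_γ is skew-symmetric and satisfies the ternary Hom-Nambu identity [ρ_γ(x_1), ρ_γ(x_2), [x_3, x_4, x_5]_γ]_γ = [[x_1,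 x_2, x_3]_γ, ρ_γ(x_4), ρ_γ(x_5)]_γ + [ρ_γ(x_3), [x_1, x_2, x_4]_γ, ρ_γ(x_5)]_γ + [ρ_γ(x_3), ρ_γ(x_4), [x_1, x_2, x_5]_γ]_γ for all x_1, ..., x_5 ∈ A. -/
/-!
By the chain rule, the Jacobian matrix of `(ρ_γ f, ρ_γ g, ρ_γ h)` is `ρ_γ` of that of `(f, g, h)`
times the Jacobian matrix of `γ`. Since the latter has determinant `1`, `ρ_γ` is an endomorphism of
the Jacobian bracket (`jacBracket_aeval`). The Hom-Nambu identity for the twisted bracket is then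
`ρ_γ ∘ ρ_γ` applied to the Nambu identity of the Jacobian bracket (`jacBracket_nambu`), and
skew-symmetry is that of the determinant in its rows.
-/

open scoped BigOperators

/-- The Jacobian matrix of a triple of polynomials in `K[x₁,x₂,x₃]`:
the `(i,j)` entry is `∂fᵢ/∂xⱼ`. -/
noncomputable def jacMatrix {K : Type*} [Field K]
    (f : Fin 3 → MvPolynomial (Fin 3) K) :
    Matrix (Fin 3) (Fin 3) (MvPolynomial (Fin 3) K) :=
  Matrix.of fun i j => MvPolynomial.pderiv j (f i)

/-- The twisted bracket `[f, g, h]_γ = ρ_γ([f, g, h])` on `K[x₁,x₂,x₃]`. -/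
noncomputable def jacBracketTw {K : Type*} [Field K]
    (γ : Fin 3 → MvPolynomial (Fin 3) K) (f g h : MvPolynomial (Fin 3) K) :
    MvPolynomial (Fin 3) K :=
  MvPolynomial.aeval γ (jacBracket f g h)

open MvPolynomial in
/-- Chain rule for the substitution `x_k ↦ γ_k`. -/
lemma pderiv_aeval_chain {K : Type*} [Field K]
    (γ : Fin 3 → MvPolynomial (Fin 3) K) (j : Fin 3) (f : MvPolynomial (Fin 3) K) :
    pderiv j (aeval γ f) = ∑ k, aeval γ (pderiv k f) * pderiv j (γ k) := by
  induction f using MvPolynomial.induction_on with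
  | C a => simp [← MvPolynomial.algebraMap_eq]
  | add p q hp hq => simp only [map_add, hp, hq, add_mul, Finset.sum_add_distrib]
  | mul_X p i hp =>
    have hX : ∀ k, aeval γ (pderiv k (X i : MvPolynomial (Fin 3) K)) * pderiv j (γ k)
        = if k = i then pderiv j (γ i) else 0 := by
      intro k
      rcases eq_or_ne k i with rfl | h
      · simp
      · simp [pderiv_X_of_ne h.symm, h]
    simp only [map_mul, aeval_X, Derivation.leibniz, smul_eq_mul, hp, map_add, add_mul,
      Finset.sum_add_distrib, mul_assoc, hX, ← Finset.mul_sum]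
    simp

/-- Substitution multiplies the Jacobian bracket by the Jacobian determinant of `γ`, so it is a
bracket endomorphism when that determinant is `1`. -/
lemma jacBracket_aeval {K : Type*} [Field K]
    (γ : Fin 3 → MvPolynomial (Fin 3) K) (hγ : (jacMatrix γ).det = 1)
    (f g h : MvPolynomial (Fin 3) K) :
    jacBracket (MvPolynomial.aeval γ f) (MvPolynomial.aeval γ g) (MvPolynomial.aeval γ h) =
      MvPolynomial.aeval γ (jacBracket f g h) := by
  have hmat : (Matrix.of fun i j => MvPolynomial.pderiv j
      (![MvPolynomial.aeval γ f, MvPolynomial.aeval γ g, MvPolynomial.aeval γ h] i)) =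
      (MvPolynomial.aeval γ).mapMatrix
        (Matrix.of fun i j => MvPolynomial.pderiv j (![f, g, h] i)) * jacMatrix γ := by
    ext1 i j
    rw [Matrix.mul_apply]
    fin_cases i <;> exact pderiv_aeval_chain γ j _
  unfold jacBracket
  rw [hmat, Matrix.det_mul, hγ, mul_one, AlgHom.map_det]

/-- The fundamental (Nambu) identity of the Jacobian bracket. After expanding both sides by the
Leibniz rule, it is a polynomial identity in the first and second partial derivatives, which uses
only the symmetry of the latter. -/
lemma jacBracket_nambu {K : Type*} [Field K] (x₁ x₂ x₃ x₄ x₅ : MvPolynomial (Fin 3) K) :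
    jacBracket x₁ x₂ (jacBracket x₃ x₄ x₅) =
      jacBracket (jacBracket x₁ x₂ x₃) x₄ x₅ + jacBracket x₃ (jacBracket x₁ x₂ x₄) x₅ +
        jacBracket x₃ x₄ (jacBracket x₁ x₂ x₅) := by
  have hcomm : ∀ (i j : Fin 3) (f : MvPolynomial (Fin 3) K),
      MvPolynomial.pderiv i (MvPolynomial.pderiv j f) =
        MvPolynomial.pderiv j (MvPolynomial.pderiv i f) := by
    intro i j f
    have h : ⁅MvPolynomial.pderiv (R := K) i, MvPolynomial.pderiv (R := K) j⁆ = 0 := by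
      apply MvPolynomial.derivation_ext
      intro k
      simp [Derivation.commutator_apply, MvPolynomial.pderiv_X, Pi.single_apply, apply_ite]
    have h' := congrArg (fun D => D f) h
    simpa [Derivation.commutator_apply, sub_eq_zero] using h'
  simp only [jacBracket, Matrix.det_fin_three, Matrix.of_apply, Matrix.cons_val_zero,
    Matrix.cons_val_one, Matrix.cons_val, map_add, map_sub, Derivation.leibniz, smul_eq_mul]
  -- Order all mixed second derivatives the same way.
  simp only [hcomm 1 0, hcomm 2 0, hcomm 2 1]
  ring

/-- If `γ = (γ₁,γ₂,γ₃)` has Jacobian determinant `1`, then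
`(K[x₁,x₂,x₃], [·,·,·]_γ, (ρ_γ, ρ_γ))` is a ternary Hom-Nambu-Lie algebra: the twisted
bracket `[·,·,·]_γ = ρ_γ ∘ [·,·,·]` is skew-symmetric and satisfies the ternary Hom-Nambu
identity with both twisting maps equal to `ρ_γ`. -/
theorem jacBracketTw_ternary_homNambuLie {K : Type*} [Field K] [CharZero K]
    (γ : Fin 3 → MvPolynomial (Fin 3) K) (hγ : (jacMatrix γ).det = 1) :
    (∀ (σ : Equiv.Perm (Fin 3)) (f : Fin 3 → MvPolynomial (Fin 3) K),
        jacBracketTw γ (f (σ 0)) (f (σ 1)) (f (σ 2)) =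
          (Equiv.Perm.sign σ : ℤ) • jacBracketTw γ (f 0) (f 1) (f 2)) ∧
      (∀ x₁ x₂ x₃ x₄ x₅ : MvPolynomial (Fin 3) K,
        jacBracketTw γ (MvPolynomial.aeval γ x₁) (MvPolynomial.aeval γ x₂)
            (jacBracketTw γ x₃ x₄ x₅) =
          jacBracketTw γ (jacBracketTw γ x₁ x₂ x₃) (MvPolynomial.aeval γ x₄)
              (MvPolynomial.aeval γ x₅) +
            jacBracketTw γ (MvPolynomial.aeval γ x₃) (jacBracketTw γ x₁ x₂ x₄)
              (MvPolynomial.aeval γ x₅) +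
            jacBracketTw γ (MvPolynomial.aeval γ x₃) (MvPolynomial.aeval γ x₄)
              (jacBracketTw γ x₁ x₂ x₅)) := by
  constructor
  · intro σ f
    have hrow : ∀ a b c : Fin 3, jacBracket (f a) (f b) (f c) =
        ((jacMatrix f).submatrix ![a, b, c] id).det := by
      intro a b c
      unfold jacBracket
      congr 1
      ext1 i j
      fin_cases i <;> rfl
    have hσ : (![σ 0, σ 1, σ 2] : Fin 3 → Fin 3) = σ := by
      ext i; fin_cases i <;> rfl
    have hid : (![0, 1, 2] : Fin 3 → Fin 3) = id := by
      ext i; fin_cases i <;> rfl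
    unfold jacBracketTw
    rw [hrow, hrow, hσ, hid, Matrix.det_permute, Matrix.submatrix_id_id, map_mul, zsmul_eq_mul,
      map_intCast]
  · intro x₁ x₂ x₃ x₄ x₅
    -- Each term becomes `ρ_γ ∘ ρ_γ` applied to the corresponding untwisted one.
    simp only [jacBracketTw, jacBracket_aeval γ hγ]
    rw [jacBracket_nambu, map_add, map_add, map_add, map_add]
end

section
/- Let (V, m, (α_1, ..., α_{n-1})) be an n-ary totally Hom-associative algebra and (V', m', (α'_1, ..., α'_{n-1})) an n-ary partially Hom-associative algebra over a field K of characteristic zero. Let M : (V ⊗ V')^n → V ⊗ V' be an n-linear map satisfying M(x_1 ⊗ x'_1, ..., x_n ⊗ x'_n) = m(x_1, ..., x_n) ⊗ m'(x'_1, ..., x'_n) on pure tensors, and set β_i = α_i ⊗ α'_i for i = 1, ..., n-1. Then (V ⊗ V', M, (β_1, ..., β_{n-1})) is an n-ary partially Hom-associative algebra, i.e. M satisfies the n-ary partial Hom-associativity identity with respect to (β_1, ..., β_{n-1}). -/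
/-!
The left-hand side of the partial Hom-associativity identity is multilinear in `x`
(`assocTerm`), so it suffices to check it on pure tensors `x p = y p ⊗ y' p`
(`MultilinearMap.eq_zero_of_pure_tensors`). There the `i`-th term factors as
`m (AssocArgs m α i y) ⊗ m' (AssocArgs m' α' i y')`. By total Hom-associativity the left factor
does not depend on `i`, so it can be pulled out of the sum, and the remaining sum of right factors
vanishes by partial Hom-associativity.
-/

open scoped BigOperators TensorProduct

/-- Each variable `x p` enters exactly one slot `q` of the argument vector, and it does so
linearly. -/
lemma AssocArgs_update {K V : Type*} [Field K] [AddCommGroup V] [Module K V] {n : ℕ}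
    (m : MultilinearMap K (fun _ : Fin n => V) V) (α : Fin (n - 1) → V →ₗ[K] V)
    (i : Fin n) (x : Fin (2 * n - 1) → V) (p : Fin (2 * n - 1)) :
    ∃ (q : Fin n) (L : V →ₗ[K] V), ∀ v : V,
      AssocArgs m α i (Function.update x p v) =
        Function.update (AssocArgs m α i x) q (L v) := by
  obtain ⟨p, hp⟩ := p
  obtain ⟨i, hi⟩ := i
  rcases lt_or_ge p i with h1 | h1
  · refine ⟨⟨p, by omega⟩, α ⟨p, by omega⟩, fun v => ?_⟩
    ext ⟨j, hj⟩
    by_cases hjp : j = p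
    · subst hjp
      simp [AssocArgs, h1]
    · have h2 : ∀ k, i + k ≠ p := by omega
      have h3 : j + n - 1 ≠ p := by omega
      simp [AssocArgs, hjp, h2, h3]
  · rcases lt_or_ge p (i + n) with h2 | h2
    · refine ⟨⟨i, hi⟩, m.toLinearMap (fun k : Fin n => x ⟨i + k, by omega⟩) ⟨p - i, by omega⟩,
        fun v => ?_⟩
      ext ⟨j, hj⟩
      by_cases hji : j = i
      · subst hji
        simp only [AssocArgs, lt_irrefl, dite_false, dite_true, Function.update_self,
          MultilinearMap.toLinearMap_apply]
        congr 1
        ext ⟨k, hk⟩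
        have : j + k = p ↔ k = p - j := by omega
        simp [Function.update_apply, this]
      · by_cases hlt : j < i
        · have h3 : j ≠ p := by omega
          simp [AssocArgs, hji, hlt, h3]
        · have h3 : j + n - 1 ≠ p := by omega
          simp [AssocArgs, hji, hlt, h3]
    · refine ⟨⟨p + 1 - n, by omega⟩, α ⟨p - n, by omega⟩, fun v => ?_⟩
      ext ⟨j, hj⟩
      have h4 : ∀ k : Fin n, i + (k : ℕ) ≠ p := by intro k; omega
      by_cases hjp : j = p + 1 - n
      · subst hjp
        have h5 : ¬ (p + 1 - n < i) := by omega
        have h6 : ¬ (p + 1 - n = i) := by omega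
        have h7 : p + 1 - n + n - 1 = p := by omega
        have h8 : p + 1 - n - 1 = p - n := by omega
        simp [AssocArgs, h5, h6, h7, h8]
      · have h3 : j + n - 1 ≠ p := by omega
        have h5 : j < i → j ≠ p := by omega
        by_cases hlt : j < i
        · simp [AssocArgs, hjp, hlt, h5 hlt]
        · simp [AssocArgs, hjp, hlt, h3, h4]

/-- The `i`-th term of the Hom-associativity identities, as a multilinear map in the
`2 n - 1` variables. -/
def assocTerm {K V : Type*} [Field K] [AddCommGroup V] [Module K V] {n : ℕ}
    (m : MultilinearMap K (fun _ : Fin n => V) V) (α : Fin (n - 1) → V →ₗ[K] V)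
    (i : Fin n) : MultilinearMap K (fun _ : Fin (2 * n - 1) => V) V :=
  MultilinearMap.mk' (fun x => m (AssocArgs m α i x))
    (fun x p v w => by
      obtain ⟨q, L, h⟩ := AssocArgs_update m α i x p
      simp only [h, map_add, MultilinearMap.map_update_add])
    (fun x p c v => by
      obtain ⟨q, L, h⟩ := AssocArgs_update m α i x p
      simp only [h, map_smul, MultilinearMap.map_update_smul])

/-- Pure tensors span the tensor product, so a multilinear map may be tested on them one
coordinate at a time. -/
lemma MultilinearMap.eq_zero_of_pure_tensors {K V V' W ι : Type*} [Field K]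
    [AddCommGroup V] [Module K V] [AddCommGroup V'] [Module K V'] [AddCommGroup W] [Module K W]
    [Fintype ι] (f : MultilinearMap K (fun _ : ι => V ⊗[K] V') W)
    (hf : ∀ (y : ι → V) (y' : ι → V'), f (fun p => y p ⊗ₜ[K] y' p) = 0)
    (x : ι → V ⊗[K] V') : f x = 0 := by
  classical
  -- Induction on the set of coordinates that are not required to be pure.
  have key : ∀ (s : Finset ι) (x : ι → V ⊗[K] V'),
      (∀ p, p ∉ s → ∃ (a : V) (b : V'), x p = a ⊗ₜ[K] b) → f x = 0 := by
    intro s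
    induction s using Finset.induction_on with
    | empty =>
      intro x hx
      choose y y' h using fun p => hx p (Finset.notMem_empty p)
      rw [funext h]
      exact hf y y'
    | insert a s ha ih =>
      intro x hx
      have h : ∀ t : V ⊗[K] V', f (Function.update x a t) = 0 := by
        intro t
        induction t using TensorProduct.induction_on with
        | zero => exact f.map_update_zero x a
        | tmul v v' =>
          refine ih _ fun p hp => ?_
          by_cases hpa : p = a
          · subst hpa
            exact ⟨v, v', by simp⟩
          · rw [Function.update_of_ne hpa]
            exact hx p (by simp [hpa, hp])
        | add t u ht hu => rw [f.map_update_add, ht, hu, add_zero]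
      simpa using h (x a)
  exact key Finset.univ x fun p hp => absurd (Finset.mem_univ p) hp

/-- The tensor product of an `n`-ary totally Hom-associative algebra
`(V, m, (α_i))` and an `n`-ary partially Hom-associative algebra `(V', m', (α'_i))` is an
`n`-ary partially Hom-associative algebra `(V ⊗ V', M, (α_i ⊗ α'_i))`, where `M` is the
tensor product of the `n`-linear maps `m` and `m'`. -/
theorem tensor_totallyHomAssoc_partiallyHomAssoc {K V V' : Type*} [Field K] [CharZero K]
    [AddCommGroup V] [Module K V] [AddCommGroup V'] [Module K V']
    {n : ℕ} (hn : 2 ≤ n)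
    (m : MultilinearMap K (fun _ : Fin n => V) V)
    (m' : MultilinearMap K (fun _ : Fin n => V') V')
    (α : Fin (n - 1) → V →ₗ[K] V) (α' : Fin (n - 1) → V' →ₗ[K] V')
    (hm : TotalHomAssociativity m α)
    (hm' : PartialHomAssociativity m' α')
    (M : MultilinearMap K (fun _ : Fin n => V ⊗[K] V') (V ⊗[K] V'))
    (hM : ∀ (x : Fin n → V) (x' : Fin n → V'),
      M (fun i => x i ⊗ₜ[K] x' i) = m x ⊗ₜ[K] m' x') :
    PartialHomAssociativity M (fun i => TensorProduct.map (α i) (α' i)) := by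
  intro x
  have hsum := MultilinearMap.eq_zero_of_pure_tensors
    (∑ i : Fin n, assocTerm M (fun i => TensorProduct.map (α i) (α' i)) i) ?_ x
  · simpa [assocTerm] using hsum
  intro y y'
  have hargs : ∀ i : Fin n,
      AssocArgs M (fun i => TensorProduct.map (α i) (α' i)) i (fun p => y p ⊗ₜ[K] y' p) =
        fun j => AssocArgs m α i y j ⊗ₜ[K] AssocArgs m' α' i y' j := by
    intro i
    ext j
    unfold AssocArgs
    split_ifs
    · exact TensorProduct.map_tmul _ _ _ _
    · exact hM _ _
    · exact TensorProduct.map_tmul _ _ _ _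
  have hconst : ∀ i j : Fin n, m (AssocArgs m α i y) = m (AssocArgs m α j y) := by
    intro i j
    rcases lt_trichotomy i j with h | rfl | h
    · exact hm i j h y
    · rfl
    · exact (hm j i h y).symm
  let i₀ : Fin n := ⟨0, by omega⟩
  calc (∑ i : Fin n, assocTerm M (fun i => TensorProduct.map (α i) (α' i)) i)
        (fun p => y p ⊗ₜ[K] y' p)
      = ∑ i : Fin n, m (AssocArgs m α i₀ y) ⊗ₜ[K] m' (AssocArgs m' α' i y') := by
        simp only [assocTerm, sum_apply, MultilinearMap.mk'_apply]
        refine Finset.sum_congr rfl fun i _ => ?_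
        rw [hargs, hM, hconst i i₀]
    _ = 0 := by rw [← TensorProduct.tmul_sum, hm' y', TensorProduct.tmul_zero]
end

section
/- Let (V, m, (α_1, ..., α_{n-1})) be an n-ary totally Hom-associative algebra over a field K of characteristic zero with m symmetric, and let (V', m', (α'_1, ..., α'_{n-1})) be an n-ary Hom-Lie algebra. Let M : (V ⊗ V')^n → V ⊗ V' be an n-linear map satisfying M(x_1 ⊗ x'_1, ..., x_n ⊗ x'_n) = m(x_1, ..., x_n) ⊗ m'(x'_1, ..., x'_n) on pure tensors, and set β_i = α_i ⊗ α'_i for i = 1, ..., n-1. Then (V ⊗ V', M, (β_1, ..., β_{n-1})) is an n-ary Hom-Lie algebra: M is skew-symmetric and satisfies the n-ary Hom-Jacobi identity with respect to (β_1, ..., β_{n-1}). -/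
/-!
Write `F(x) = m(α_1 x_1, …, α_{n-1} x_{n-1}, m(x_n, …, x_{2n-1}))`. For a symmetric totally
Hom-associative `m`, `F` is invariant under all of `S_{2n-1}`: total Hom-associativity lets the
inner product be moved to any slot, where symmetry of the inner `m` allows its arguments to be
permuted, and every adjacent pair of indices lies in one of these windows of length `n`
(`nested_symmetric`).

On pure tensors the Hom-Jacobi sum of `M` is `Σ_σ sgn(σ) F(x ∘ σ) ⊗ F'(x' ∘ σ)`, where `F'` is the
same expression for `m'`. Invariance of `F` turns it into `F(x) ⊗ Σ_σ sgn(σ) F'(x' ∘ σ)`, which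
vanishes by the Hom-Jacobi identity of `m'`. Both conclusions extend from pure tensors to all
tensors because the two sides are multilinear (`multilinear_ext_tmul`).
-/

open scoped BigOperators TensorProduct

/-- Symmetry of an `n`-linear map: `m(x_{σ(1)}, …, x_{σ(n)}) = m(x_1, …, x_n)`. -/
def SymmetricMap {K V : Type*} [Field K] [AddCommGroup V] [Module K V] {n : ℕ}
    (m : MultilinearMap K (fun _ : Fin n => V) V) : Prop :=
  ∀ (σ : Equiv.Perm (Fin n)) (x : Fin n → V), m (x ∘ σ) = m x

/-- The outer argument vector `(α_1 x_1, …, α_{n-1} x_{n-1}, m(x_n, …, x_{2n-1}))` occurring in the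
Hom-Jacobi identity. -/
def jacobiArgs {K V : Type*} [Field K] [AddCommGroup V] [Module K V] {n : ℕ}
    (m : MultilinearMap K (fun _ : Fin n => V) V) (α : Fin (n - 1) → V →ₗ[K] V)
    (x : Fin (2 * n - 1) → V) : Fin n → V :=
  fun j =>
    if h : (j : ℕ) < n - 1 then α ⟨j, h⟩ (x ⟨j, by omega⟩)
    else m (fun k : Fin n => x ⟨n - 1 + (k : ℕ), by omega⟩)

/-- Changing one coordinate of `x` changes exactly one slot of `jacobiArgs m α x`, and does so
linearly; this is what makes the nested product multilinear. -/
lemma jacobiArgs_update {K V : Type*} [Field K] [AddCommGroup V] [Module K V] {n : ℕ}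
    (m : MultilinearMap K (fun _ : Fin n => V) V) (α : Fin (n - 1) → V →ₗ[K] V)
    (x : Fin (2 * n - 1) → V) (p : Fin (2 * n - 1)) :
    ∃ (q : Fin n) (L : V →ₗ[K] V), ∀ c,
      jacobiArgs m α (Function.update x p c) = Function.update (jacobiArgs m α x) q (L c) := by
  have hp := p.isLt
  by_cases h : (p : ℕ) < n - 1
  · refine ⟨⟨p, by omega⟩, α ⟨p, h⟩, fun c => ?_⟩
    funext j
    by_cases hj : (j : ℕ) = p
    · obtain ⟨j, hj0⟩ := j
      change j = p at hj
      subst hj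
      simp [jacobiArgs, h]
    · have hj' : j ≠ ⟨p, by omega⟩ := fun e => hj (by rw [e])
      rw [Function.update_of_ne hj']
      unfold jacobiArgs
      split_ifs with h1
      · rw [Function.update_of_ne (fun e => hj (congrArg Fin.val e))]
      · congr 1
        funext k
        rw [Function.update_of_ne]
        intro e
        have := congrArg Fin.val e
        simp only at this
        omega
  · refine ⟨⟨n - 1, by omega⟩,
      m.toLinearMap (fun k : Fin n => x ⟨n - 1 + (k : ℕ), by omega⟩) ⟨p - (n - 1), by omega⟩,
      fun c => ?_⟩
    funext j
    by_cases hj : (j : ℕ) = n - 1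
    · obtain ⟨j, hj0⟩ := j
      change j = n - 1 at hj
      subst hj
      simp only [jacobiArgs, lt_irrefl, dite_false, Function.update_self,
        MultilinearMap.toLinearMap_apply]
      congr 1
      funext k
      simp only [Function.update_apply, Fin.ext_iff]
      exact if_congr (by omega) rfl rfl
    · have hj' : j ≠ ⟨n - 1, by omega⟩ := fun e => hj (by rw [e])
      rw [Function.update_of_ne hj']
      have h1 : (j : ℕ) < n - 1 := by omega
      simp only [jacobiArgs, h1, dite_true]
      rw [Function.update_of_ne]
      intro e
      have := congrArg Fin.val e
      simp only at this
      omega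

/-- The nested product `m(α_1 x_1, …, α_{n-1} x_{n-1}, m(x_n, …, x_{2n-1}))` as a
`(2n-1)`-linear map. -/
def nestedProduct {K V : Type*} [Field K] [AddCommGroup V] [Module K V] {n : ℕ}
    (m : MultilinearMap K (fun _ : Fin n => V) V) (α : Fin (n - 1) → V →ₗ[K] V) :
    MultilinearMap K (fun _ : Fin (2 * n - 1) => V) V :=
  MultilinearMap.mk' (fun x => m (jacobiArgs m α x))
    (fun x p a b => by
      obtain ⟨q, L, h⟩ := jacobiArgs_update m α x p
      simp only [h, map_add, MultilinearMap.map_update_add])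
    (fun x p c a => by
      obtain ⟨q, L, h⟩ := jacobiArgs_update m α x p
      simp only [h, map_smul, MultilinearMap.map_update_smul])

/-- Two multilinear maps on `V ⊗ V'` that agree on pure tensors are equal. -/
lemma multilinear_ext_tmul {K V V' W ι : Type*} [Field K] [AddCommGroup V] [Module K V]
    [AddCommGroup V'] [Module K V'] [AddCommGroup W] [Module K W] [Finite ι]
    {f g : MultilinearMap K (fun _ : ι => V ⊗[K] V') W}
    (h : ∀ (x : ι → V) (x' : ι → V'),
      f (fun i => x i ⊗ₜ[K] x' i) = g (fun i => x i ⊗ₜ[K] x' i)) : f = g := by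
  refine Module.Basis.ext_multilinear
    (fun _ => (Module.Free.chooseBasis K V).tensorProduct (Module.Free.chooseBasis K V'))
    fun v => ?_
  simp only [Module.Basis.tensorProduct_apply']
  exact h _ _

/-- Adjacent transpositions generate the symmetric group, so invariance under them suffices. -/
lemma invariant_of_adjacent_swap {V U : Type*} {N : ℕ} (f : (Fin N → V) → U)
    (h : ∀ (a b : Fin N), (b : ℕ) = a + 1 → ∀ x, f (x ∘ Equiv.swap a b) = f x)
    (σ : Equiv.Perm (Fin N)) : ∀ x, f (x ∘ σ) = f x := by
  cases N with
  | zero => intro x; congr 1; exact Subsingleton.elim _ _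
  | succ N =>
    have hσ : σ ∈ Submonoid.closure
        (Set.range fun i : Fin N ↦ Equiv.swap i.castSucc i.succ) := by
      rw [Equiv.Perm.mclosure_swap_castSucc_succ]; trivial
    induction hσ using Submonoid.closure_induction with
    | mem s hs =>
      obtain ⟨i, rfl⟩ := hs
      exact h _ _ (by simp)
    | one => intro x; rfl
    | mul s t _ _ hs ht =>
      intro x
      rw [Equiv.Perm.coe_mul, ← Function.comp_assoc, ht, hs]

/-- The `i`-th Hom-associativity term is invariant under an adjacent transposition inside the
window `i, …, i + n - 1` of arguments of the inner product. -/
lemma assocArgs_swap {K V : Type*} [Field K] [AddCommGroup V] [Module K V] {n : ℕ}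
    (m : MultilinearMap K (fun _ : Fin n => V) V) (α : Fin (n - 1) → V →ₗ[K] V)
    (hsym : SymmetricMap m) (i : Fin n) (a b : Fin (2 * n - 1)) (hab : (b : ℕ) = a + 1)
    (hia : (i : ℕ) ≤ a) (hbi : (b : ℕ) < i + n) (x : Fin (2 * n - 1) → V) :
    AssocArgs m α i (x ∘ Equiv.swap a b) = AssocArgs m α i x := by
  have hfix : ∀ q : Fin (2 * n - 1), (q : ℕ) ≠ a → (q : ℕ) ≠ b →
      (x ∘ Equiv.swap a b) q = x q := by
    intro q h1 h2
    rw [Function.comp_apply, Equiv.swap_apply_of_ne_of_ne] <;> rwa [Ne, Fin.ext_iff]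
  funext j
  unfold AssocArgs
  split_ifs with h1 h2
  · rw [hfix] <;> simp only <;> omega
  · rw [← hsym (Equiv.swap ⟨a - i, by omega⟩ ⟨b - i, by omega⟩)]
    congr 1
    funext k
    simp only [Function.comp_apply]
    congr 1
    simp only [Equiv.swap_apply_def, Fin.ext_iff]
    split_ifs <;> (try dsimp only at *) <;> omega
  · rw [hfix] <;> simp only <;> omega

/-- For a symmetric totally Hom-associative `m`, the nested product is invariant under
all of `S_{2n-1}`. -/
lemma nested_symmetric {K V : Type*} [Field K] [AddCommGroup V] [Module K V]
    {n : ℕ} (hn : 2 ≤ n)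
    (m : MultilinearMap K (fun _ : Fin n => V) V) (α : Fin (n - 1) → V →ₗ[K] V)
    (hsym : SymmetricMap m) (hm : TotalHomAssociativity m α)
    (σ : Equiv.Perm (Fin (2 * n - 1))) (x : Fin (2 * n - 1) → V) :
    nestedProduct m α (x ∘ σ) = nestedProduct m α x := by
  have key : ∀ (i : Fin n) (y : Fin (2 * n - 1) → V),
      nestedProduct m α y = m (AssocArgs m α i y) := by
    intro i y
    have hlast : jacobiArgs m α y = AssocArgs m α ⟨n - 1, by omega⟩ y := by
      funext j
      unfold jacobiArgs AssocArgs
      have hj := j.isLt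
      split_ifs with h1 h2
      · rfl
      · rfl
      · exact absurd (show (j : ℕ) = n - 1 by omega) h2
    change m (jacobiArgs m α y) = _
    rw [hlast]
    by_cases hi : (i : ℕ) = n - 1
    · have : i = ⟨n - 1, by omega⟩ := Fin.ext hi
      rw [this]
    · exact (hm i ⟨n - 1, by omega⟩ (Fin.lt_def.2 (by simp only; omega)) y).symm
  refine invariant_of_adjacent_swap (nestedProduct m α) (fun a b hab y => ?_) σ x
  have hb := b.isLt
  -- The window starting at `min a (n - 1)` contains both `a` and `a + 1`.
  let i : Fin n := ⟨min a (n - 1), by omega⟩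
  rw [key i, key i, assocArgs_swap m α hsym i a b hab] <;> simp only [i] <;> omega

/-- The tensor product of a symmetric `n`-ary totally Hom-associative
algebra `(V, m, (α_i))` and an `n`-ary Hom-Lie algebra `(V', m', (α'_i))` is an `n`-ary
Hom-Lie algebra `(V ⊗ V', M, (α_i ⊗ α'_i))`: `M` is skew-symmetric and satisfies the
`n`-ary Hom-Jacobi identity. -/
theorem tensor_totallyHomAssoc_homLie {K V V' : Type*} [Field K] [CharZero K]
    [AddCommGroup V] [Module K V] [AddCommGroup V'] [Module K V']
    {n : ℕ} (hn : 2 ≤ n)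
    (m : MultilinearMap K (fun _ : Fin n => V) V)
    (m' : MultilinearMap K (fun _ : Fin n => V') V')
    (α : Fin (n - 1) → V →ₗ[K] V) (α' : Fin (n - 1) → V' →ₗ[K] V')
    (hsym : SymmetricMap m) (hm : TotalHomAssociativity m α)
    (hskew' : SkewSymmetricMap m') (hm' : HomJacobiIdentity m' α')
    (M : MultilinearMap K (fun _ : Fin n => V ⊗[K] V') (V ⊗[K] V'))
    (hM : ∀ (x : Fin n → V) (x' : Fin n → V'),
      M (fun i => x i ⊗ₜ[K] x' i) = m x ⊗ₜ[K] m' x') :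
    SkewSymmetricMap M ∧
      HomJacobiIdentity M (fun i => TensorProduct.map (α i) (α' i)) := by
  constructor
  · intro σ
    have h : M.domDomCongr σ = (Equiv.Perm.sign σ : ℤ) • M := by
      refine multilinear_ext_tmul fun x x' => ?_
      have h1 := hM (x ∘ σ) (x' ∘ σ)
      rw [hsym, hskew'] at h1
      rw [smul_apply, hM, ← TensorProduct.tmul_smul]
      exact h1
    exact fun x => congrArg (fun f => f x) h
  · set β : Fin (n - 1) → V ⊗[K] V' →ₗ[K] V ⊗[K] V' :=
      fun i => TensorProduct.map (α i) (α' i) with hβ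
    have hpure : ∀ (x : Fin (2 * n - 1) → V) (x' : Fin (2 * n - 1) → V'),
        nestedProduct M β (fun i => x i ⊗ₜ[K] x' i)
          = nestedProduct m α x ⊗ₜ[K] nestedProduct m' α' x' := by
      intro x x'
      change M (jacobiArgs M β _) = m (jacobiArgs m α x) ⊗ₜ[K] m' (jacobiArgs m' α' x')
      rw [← hM]
      congr 1
      funext j
      unfold jacobiArgs
      split_ifs with h
      · simp [hβ]
      · exact hM _ _
    have hsum : ∑ σ : Equiv.Perm (Fin (2 * n - 1)), (Equiv.Perm.sign σ : ℤ) •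
        (nestedProduct M β).domDomCongr σ = 0 := by
      refine multilinear_ext_tmul fun x x' => ?_
      have hJ : ∑ σ : Equiv.Perm (Fin (2 * n - 1)), (Equiv.Perm.sign σ : ℤ) •
          nestedProduct m' α' (x' ∘ σ) = 0 := hm' x'
      rw [sum_apply, zero_apply,
        ← TensorProduct.tmul_zero V' (nestedProduct m α x), ← hJ, TensorProduct.tmul_sum]
      refine Finset.sum_congr rfl fun σ _ => ?_
      rw [smul_apply, TensorProduct.tmul_smul,
        ← nested_symmetric hn m α hsym hm σ x, ← hpure]
      rfl
    intro x
    have h := congrArg (fun f => f x) hsum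
    simp only [sum_apply, zero_apply] at h
    exact h
end
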